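/- Let u : ℝ → ℝ → ℝ be a smooth function of (x,t) with u_x(x,t) ≠ 0 for all (x,t), satisfying the Schwarzian Korteweg-de Vries equation u_t = u_{xxx} - (3/2)·u_{xx}²/u_x. Then both h₁ := 1/u_x and h₂ := u²/u_x satisfy h_t = ∂_x[ h_{xx} - (3/2)·h_x²/h ] (wherever h ≠ 0), where ∂_x denotes the partial derivative with respect to x of the bracketed expression. -/

import Mathlib

/-!
Write `p = u_x`, `q = u_xx`, `r = u_xxx`, `s = u_xxxx`. Since `u` is jointly smooth, mixed partial
derivatives commute (`dt_dx_comm`), so differentiating the equation in `x` gives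
`p_t = s - 3 q r / p + (3/2) q³ / p²`. For `h = 1/p` and `h = u²/p` the quotient rule expresses `h`,
`h_x`, `h_xx`, `h_xxx` as rational functions of `u, p, q, r, s`, and `h_t` as one of
`u, p, u_t, p_t`; after substituting for `u_t` and `p_t`, the claimed equation becomes an identity
of rational functions, valid where `p ≠ 0` and `h ≠ 0`.

Conceptually, `p = exp v` turns the `x`-differentiated equation into `v_t = v_xxx - v_x³ / 2`, which
is invariant under `v ↦ -v`; this is the case `h = 1/p`. The case `h = u²/p` follows from it
through the Möbius invariance of the Schwarzian equation under `u ↦ -1/u`.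
-/

/-- Total `x`-derivative of a function of `(x, t)`. -/
noncomputable def dx (f : ℝ → ℝ → ℝ) : ℝ → ℝ → ℝ := fun x t => deriv (fun y => f y t) x

/-- Total `t`-derivative of a function of `(x, t)`. -/
noncomputable def dt (f : ℝ → ℝ → ℝ) : ℝ → ℝ → ℝ := fun x t => deriv (fun s => f x s) t

/-- The Schwarzian Korteweg-de Vries equation. -/
def SKdV (u : ℝ → ℝ → ℝ) : Prop :=
  ∀ x t, dt u x t =
    dx (dx (dx u)) x t - (3/2) * (dx (dx u) x t)^2 / dx u x t

/-- The `x`-differentiated Schwarzian KdV equation for a function `h`, wherever `h ≠ 0`. -/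
def SKdVdiff (h : ℝ → ℝ → ℝ) : Prop :=
  ∀ x t, h x t ≠ 0 →
    dt h x t = dx (fun x t => dx (dx h) x t - (3/2) * (dx h x t)^2 / h x t) x t

/-- Joint smoothness of a function of `(x, t)` written in curried form. -/
def Smooth2 (f : ℝ → ℝ → ℝ) : Prop :=
  ContDiff ℝ (⊤ : ℕ∞) (fun p : ℝ × ℝ => f p.1 p.2)

lemma Smooth2.hasFDerivAt {f : ℝ → ℝ → ℝ} (hf : Smooth2 f) (p : ℝ × ℝ) :
    HasFDerivAt (fun p : ℝ × ℝ => f p.1 p.2) (fderiv ℝ (fun p : ℝ × ℝ => f p.1 p.2) p) p :=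
  (ContDiff.differentiable hf (by simp) p).hasFDerivAt

lemma Smooth2.dx_eq {f : ℝ → ℝ → ℝ} (hf : Smooth2 f) (x t : ℝ) :
    HasDerivAt (fun y => f y t) (fderiv ℝ (fun p : ℝ × ℝ => f p.1 p.2) (x, t) (1, 0)) x :=
  (hf.hasFDerivAt (x, t)).comp_hasDerivAt (f := fun y => (y, t)) x
    ((hasDerivAt_id x).prodMk (hasDerivAt_const x t))

lemma Smooth2.dt_eq {f : ℝ → ℝ → ℝ} (hf : Smooth2 f) (x t : ℝ) :
    HasDerivAt (fun s => f x s) (fderiv ℝ (fun p : ℝ × ℝ => f p.1 p.2) (x, t) (0, 1)) t :=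
  (hf.hasFDerivAt (x, t)).comp_hasDerivAt (f := fun s => (x, s)) t
    ((hasDerivAt_const t x).prodMk (hasDerivAt_id t))

lemma Smooth2.hasDerivAt_dx {f : ℝ → ℝ → ℝ} (hf : Smooth2 f) (x t : ℝ) :
    HasDerivAt (fun y => f y t) (dx f x t) x :=
  (hf.dx_eq x t).differentiableAt.hasDerivAt

lemma Smooth2.hasDerivAt_dt {f : ℝ → ℝ → ℝ} (hf : Smooth2 f) (x t : ℝ) :
    HasDerivAt (fun s => f x s) (dt f x t) t :=
  (hf.dt_eq x t).differentiableAt.hasDerivAt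

lemma Smooth2.fderiv_apply {f : ℝ → ℝ → ℝ} (hf : Smooth2 f) (v : ℝ × ℝ) :
    Smooth2 (fun x t => fderiv ℝ (fun p : ℝ × ℝ => f p.1 p.2) (x, t) v) :=
  (ContDiff.fderiv_right (m := (⊤ : ℕ∞)) hf (by simp)).clm_apply contDiff_const

lemma Smooth2.dx_fun {f : ℝ → ℝ → ℝ} (hf : Smooth2 f) :
    dx f = fun x t => fderiv ℝ (fun p : ℝ × ℝ => f p.1 p.2) (x, t) (1, 0) := by
  funext x t
  exact (hf.dx_eq x t).deriv

lemma Smooth2.dt_fun {f : ℝ → ℝ → ℝ} (hf : Smooth2 f) :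
    dt f = fun x t => fderiv ℝ (fun p : ℝ × ℝ => f p.1 p.2) (x, t) (0, 1) := by
  funext x t
  exact (hf.dt_eq x t).deriv

lemma Smooth2.smooth_dx {f : ℝ → ℝ → ℝ} (hf : Smooth2 f) : Smooth2 (dx f) := by
  rw [hf.dx_fun]
  exact hf.fderiv_apply _

/-- Mixed partial derivatives commute: symmetry of the second Fréchet derivative, evaluated on the
two coordinate directions. -/
lemma Smooth2.dt_dx_comm {f : ℝ → ℝ → ℝ} (hf : Smooth2 f) (x t : ℝ) :
    dt (dx f) x t = dx (dt f) x t := by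
  have hd : Differentiable ℝ (fderiv ℝ (fun p : ℝ × ℝ => f p.1 p.2)) :=
    (ContDiff.fderiv_right (m := (⊤ : ℕ∞)) hf (by simp)).differentiable (by simp)
  have key : ∀ v w : ℝ × ℝ,
      fderiv ℝ (fun p : ℝ × ℝ => fderiv ℝ (fun p : ℝ × ℝ => f p.1 p.2) (p.1, p.2) v) (x, t) w
        = fderiv ℝ (fderiv ℝ (fun p : ℝ × ℝ => f p.1 p.2)) (x, t) w v := by
    intro v w
    have h := ((hd (x, t)).hasFDerivAt.clm_apply (hasFDerivAt_const v (x, t))).fderiv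
    simp only [Prod.mk.eta]
    rw [h]
    simp
  have hsym : IsSymmSndFDerivAt ℝ (fun p : ℝ × ℝ => f p.1 p.2) (x, t) :=
    (ContDiff.contDiffAt hf).isSymmSndFDerivAt
      (by simpa using WithTop.coe_le_coe.2 (le_top : (2 : ℕ∞) ≤ ⊤))
  rw [hf.dx_fun, hf.dt_fun, (hf.fderiv_apply _).dt_fun, (hf.fderiv_apply _).dx_fun]
  simp only [key]
  exact hsym.eq _ _

/-- The `x`-derivative of the Schwarzian KdV equation, with the order of derivatives exchanged. -/
lemma dt_dx_of_SKdV {u : ℝ → ℝ → ℝ} (hu : Smooth2 u) (hux : ∀ x t, dx u x t ≠ 0)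
    (heq : SKdV u) (x t : ℝ) :
    dt (dx u) x t = dx (dx (dx (dx u))) x t
      - 3 * dx (dx u) x t * dx (dx (dx u)) x t / dx u x t
      + (3/2) * (dx (dx u) x t)^3 / (dx u x t)^2 := by
  rw [hu.dt_dx_comm]
  have e : dt u = fun x t => dx (dx (dx u)) x t - (3/2) * (dx (dx u) x t)^2 / dx u x t := by
    funext x t
    exact heq x t
  rw [e]
  have hp := hu.smooth_dx.hasDerivAt_dx x t
  have hq := hu.smooth_dx.smooth_dx.hasDerivAt_dx x t
  have hr := hu.smooth_dx.smooth_dx.smooth_dx.hasDerivAt_dx x t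
  refine (hr.sub (((hq.pow 2).const_mul (3/2)).div hp (hux x t))).deriv.trans ?_
  have := hux x t
  simp only [Nat.reduceSub, pow_one, Nat.cast_ofNat, Pi.pow_apply]
  field_simp
  ring

/-- Both self-potentialisations `h₁ = 1/u_x` and `h₂ = u²/u_x` of the Schwarzian KdV
equation solve its `x`-differentiated form. -/
theorem skdv_self_potentialisations
    (u : ℝ → ℝ → ℝ)
    (hu : ContDiff ℝ (⊤ : ℕ∞) (fun p : ℝ × ℝ => u p.1 p.2))
    (hux : ∀ x t, dx u x t ≠ 0)
    (heq : SKdV u) :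
    SKdVdiff (fun x t => 1 / dx u x t) ∧
    SKdVdiff (fun x t => (u x t)^2 / dx u x t) := by
  have hs : Smooth2 u := hu
  have h0 := hs.hasDerivAt_dx
  have hp := hs.smooth_dx.hasDerivAt_dx
  have hq := hs.smooth_dx.smooth_dx.hasDerivAt_dx
  have hr := hs.smooth_dx.smooth_dx.smooth_dx.hasDerivAt_dx
  have hut := hs.hasDerivAt_dt
  have hpt := hs.smooth_dx.hasDerivAt_dt
  have hmix := dt_dx_of_SKdV hs hux heq
  constructor
  · have e1 : dx (fun x t => 1 / dx u x t) = fun x t => - dx (dx u) x t / (dx u x t)^2 := by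
      funext x t
      refine ((hasDerivAt_const x (1:ℝ)).div (hp x t) (hux x t)).deriv.trans ?_
      simp
    have e2 : dx (fun x t => - dx (dx u) x t / (dx u x t)^2) = fun x t =>
        - dx (dx (dx u)) x t / (dx u x t)^2 + 2 * (dx (dx u) x t)^2 / (dx u x t)^3 := by
      funext x t
      have := hux x t
      refine ((hq x t).neg.div ((hp x t).pow 2) (pow_ne_zero 2 this)).deriv.trans ?_
      simp only [Nat.reduceSub, pow_one, Nat.cast_ofNat, Pi.pow_apply, Pi.neg_apply]
      field_simp
      ring
    intro x t _
    have hne := hux x t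
    rw [e1, e2]
    have hL : dt (fun x t => 1 / dx u x t) x t = - dt (dx u) x t / (dx u x t)^2 := by
      refine ((hasDerivAt_const t (1:ℝ)).div (hpt x t) hne).deriv.trans ?_
      simp
    rw [hL, hmix]
    have hxx := ((hr x t).neg.div ((hp x t).pow 2) (pow_ne_zero 2 hne)).add
      ((((hq x t).pow 2).const_mul 2).div ((hp x t).pow 3) (pow_ne_zero 3 hne))
    have hx := (hq x t).neg.div ((hp x t).pow 2) (pow_ne_zero 2 hne)
    have hh := (hasDerivAt_const x (1:ℝ)).div (hp x t) hne
    refine Eq.symm ((hxx.sub (((hx.pow 2).const_mul (3/2)).div hh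
      (one_div_ne_zero hne))).deriv.trans ?_)
    simp only [Nat.reduceSub, pow_one, Nat.cast_ofNat, Pi.pow_apply, Pi.neg_apply, Pi.div_apply]
    field_simp
    ring
  · have e1 : dx (fun x t => (u x t)^2 / dx u x t) = fun x t =>
        2 * u x t - (u x t)^2 * dx (dx u) x t / (dx u x t)^2 := by
      funext x t
      have := hux x t
      refine (((h0 x t).pow 2).div (hp x t) this).deriv.trans ?_
      simp only [Nat.reduceSub, pow_one, Nat.cast_ofNat, Pi.pow_apply]
      field_simp
    have e2 : dx (fun x t => 2 * u x t - (u x t)^2 * dx (dx u) x t / (dx u x t)^2) = fun x t =>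
        2 * dx u x t - 2 * u x t * dx (dx u) x t / dx u x t
          - (u x t)^2 * dx (dx (dx u)) x t / (dx u x t)^2
          + 2 * (u x t)^2 * (dx (dx u) x t)^2 / (dx u x t)^3 := by
      funext x t
      have := hux x t
      refine (((h0 x t).const_mul 2).sub ((((h0 x t).pow 2).mul (hq x t)).div ((hp x t).pow 2)
        (pow_ne_zero 2 this))).deriv.trans ?_
      simp only [Nat.reduceSub, pow_one, Nat.cast_ofNat, Pi.pow_apply, Pi.mul_apply]
      field_simp
      ring
    intro x t hne0
    have hne := hux x t
    have hu0 : u x t ≠ 0 := by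
      intro h
      simp [h] at hne0
    rw [e1, e2]
    have hL : dt (fun x t => (u x t)^2 / dx u x t) x t =
        2 * u x t * dt u x t / dx u x t - (u x t)^2 * dt (dx u) x t / (dx u x t)^2 := by
      refine (((hut x t).pow 2).div (hpt x t) hne).deriv.trans ?_
      simp only [Nat.reduceSub, pow_one, Nat.cast_ofNat, Pi.pow_apply]
      field_simp
    rw [hL, hmix, heq x t]
    have hxx := ((((hp x t).const_mul 2).sub
      ((((h0 x t).const_mul 2).mul (hq x t)).div (hp x t) hne)).sub
      ((((h0 x t).pow 2).mul (hr x t)).div ((hp x t).pow 2) (pow_ne_zero 2 hne))).add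
      (((((h0 x t).pow 2).const_mul 2).mul ((hq x t).pow 2)).div ((hp x t).pow 3)
        (pow_ne_zero 3 hne))
    have hx := ((h0 x t).const_mul 2).sub ((((h0 x t).pow 2).mul (hq x t)).div ((hp x t).pow 2)
        (pow_ne_zero 2 hne))
    have hh := ((h0 x t).pow 2).div (hp x t) hne
    refine Eq.symm ((hxx.sub (((hx.pow 2).const_mul (3/2)).div hh hne0)).deriv.trans ?_)
    simp only [Nat.reduceSub, pow_one, Nat.cast_ofNat, Pi.pow_apply, Pi.mul_apply, Pi.div_apply, Pi.sub_apply]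
    field_simp
    ring
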